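/- For every n : ℕ, the number of black-white trees with n nodes equals the number of zigzag-free binary trees with n nodes. (Equivalently, the maps BwToBz and BzToBw of the paper are mutually inverse size-preserving bijections between black-white trees and zigzag-free trees.) -/

import Mathlib

mutual
  /-- Black-white trees with a black root: a black node has no right child and
  its left subtree is either a black-rooted tree or a (possibly empty) white-rooted tree. -/
  inductive BWBlack : Type
    | blackLeft : BWBlack → BWBlack
    | whiteLeft : BWWhite → BWBlack

  /-- (Possibly empty) white-rooted black-white trees: a white node has a possibly empty
  white-rooted left subtree and an optional black-rooted right subtree. -/
  inductive BWWhite : Type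
    | empty : BWWhite
    | whiteLeft : BWWhite → BWWhite
    | whiteLeftBlackRight : BWWhite → BWBlack → BWWhite
end

mutual
  /-- Number of nodes of a black-rooted black-white tree. -/
  def BWBlack.size : BWBlack → ℕ
    | .blackLeft t => t.size + 1
    | .whiteLeft t => t.size + 1

  /-- Number of nodes of a (possibly empty) white-rooted black-white tree. -/
  def BWWhite.size : BWWhite → ℕ
    | .empty => 0
    | .whiteLeft t => t.size + 1
    | .whiteLeftBlackRight t t' => t.size + t'.size + 1
end

/-- Binary trees, where each node has an optional left child and an optional right child
(`nil` denotes the absence of a child; the empty tree is `nil`). -/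
inductive BTree : Type
  | nil : BTree
  | node : BTree → BTree → BTree

/-- Number of nodes of a binary tree. -/
def BTree.size : BTree → ℕ
  | .nil => 0
  | .node l r => l.size + r.size + 1

/-- A binary tree is zigzag-free if it contains no node whose left child
has a right child but no left child. -/
def BTree.zigzagFree : BTree → Prop
  | .nil => True
  | .node l r =>
      (∀ a b : BTree, l ≠ .node .nil (.node a b)) ∧ l.zigzagFree ∧ r.zigzagFree

/-!
A nonempty zigzag-free tree is of one of two kinds. Either its root has only a right child, and then
the right subtree is an arbitrary nonempty zigzag-free tree; or it may itself serve as a left child.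
A tree of the second kind is either a single node, or its left subtree is again of the second kind
and its right subtree is empty or of either kind. Black trees follow the grammar of all nonempty
zigzag-free trees, a black node above a black tree being the first kind, and white trees follow the
grammar of the second kind, with the empty white tree for the single node. A white tree is thus one
node smaller than its binary tree, and the black node above it makes up for the difference.
-/

/-- The shape excluded for left children in a zigzag-free tree: the root has a right child but no
left child. -/
def BTree.HasOnlyRightChild (t : BTree) : Prop :=
  ∃ a b, t = .node .nil (.node a b)

mutual
  /-- The zigzag-free tree encoded by a black tree. -/
  def BWBlack.toBTree : BWBlack → BTree
    | .blackLeft b => .node .nil b.toBTree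
    | .whiteLeft w => w.toBTree

  /-- The zigzag-free tree encoded by a white tree. It has one node more than the white tree, so
  that the empty white tree encodes a single node. -/
  def BWWhite.toBTree : BWWhite → BTree
    | .empty => .node .nil .nil
    | .whiteLeft w => .node w.toBTree .nil
    | .whiteLeftBlackRight w b => .node w.toBTree b.toBTree
end

mutual
  /-- The black tree encoding a nonempty zigzag-free tree, inverse to `BWBlack.toBTree`.
  The value at other trees is junk. -/
  def BTree.toBlack : BTree → BWBlack
    | .node .nil (.node a b) => .blackLeft (BTree.node a b).toBlack
    | t => .whiteLeft t.toWhite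
  termination_by t => (sizeOf t, 1)

  /-- The white tree encoding a nonempty zigzag-free tree whose root does not have only a right
  child, inverse to `BWWhite.toBTree`. The value at other trees is junk. -/
  def BTree.toWhite : BTree → BWWhite
    | .nil => .empty
    | .node .nil _ => .empty
    | .node l .nil => .whiteLeft l.toWhite
    | .node l r => .whiteLeftBlackRight l.toWhite r.toBlack
  termination_by t => (sizeOf t, 0)
end

namespace BTree

variable {l r t : BTree}

theorem exists_eq_node_of_ne_nil (ht : t ≠ nil) : ∃ l r, t = node l r := by
  cases t with
  | nil => exact absurd rfl ht
  | node l r => exact ⟨l, r, rfl⟩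

theorem hasOnlyRightChild_node_iff : (node l r).HasOnlyRightChild ↔ l = nil ∧ r ≠ nil := by
  cases r <;> simp [HasOnlyRightChild]

theorem zigzagFree_node_iff :
    (node l r).zigzagFree ↔ ¬l.HasOnlyRightChild ∧ l.zigzagFree ∧ r.zigzagFree := by
  simp only [zigzagFree, HasOnlyRightChild, not_exists, ne_eq]

theorem toBlack_node_nil_left (hr : r ≠ nil) : (node nil r).toBlack = .blackLeft r.toBlack := by
  obtain ⟨a, b, rfl⟩ := exists_eq_node_of_ne_nil hr
  rw [toBlack]

theorem toBlack_of_not_hasOnlyRightChild (ht : ¬t.HasOnlyRightChild) :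
    t.toBlack = .whiteLeft t.toWhite := by
  rw [toBlack]
  exact fun a b h => ht ⟨a, b, h⟩

theorem toWhite_node_nil_right (hl : l ≠ nil) : (node l nil).toWhite = .whiteLeft l.toWhite := by
  rw [toWhite]
  exact hl

theorem toWhite_node (hl : l ≠ nil) (hr : r ≠ nil) :
    (node l r).toWhite = .whiteLeftBlackRight l.toWhite r.toBlack := by
  rw [toWhite]
  exacts [hl, hr]

end BTree

theorem BWWhite.toBTree_ne_nil (w : BWWhite) : w.toBTree ≠ .nil := by
  cases w <;> simp [toBTree]

theorem BWBlack.toBTree_ne_nil (b : BWBlack) : b.toBTree ≠ .nil := by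
  cases b with
  | blackLeft b => simp [toBTree]
  | whiteLeft w => exact w.toBTree_ne_nil

theorem BWWhite.not_hasOnlyRightChild_toBTree (w : BWWhite) : ¬w.toBTree.HasOnlyRightChild := by
  cases w <;> simp [toBTree, BTree.hasOnlyRightChild_node_iff, toBTree_ne_nil]

mutual
  theorem BWBlack.size_toBTree : ∀ b : BWBlack, b.toBTree.size = b.size
    | .blackLeft b => by simp [BWBlack.toBTree, BTree.size, BWBlack.size, b.size_toBTree]
    | .whiteLeft w => by simp [BWBlack.toBTree, BWBlack.size, w.size_toBTree]

  theorem BWWhite.size_toBTree : ∀ w : BWWhite, w.toBTree.size = w.size + 1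
    | .empty => rfl
    | .whiteLeft w => by simp [BWWhite.toBTree, BTree.size, BWWhite.size, w.size_toBTree]
    | .whiteLeftBlackRight w b => by
        simp only [BWWhite.toBTree, BTree.size, BWWhite.size, w.size_toBTree, b.size_toBTree]
        omega
end

mutual
  theorem BWBlack.zigzagFree_toBTree : ∀ b : BWBlack, b.toBTree.zigzagFree
    | .blackLeft b => by simp [BWBlack.toBTree, BTree.zigzagFree, b.zigzagFree_toBTree]
    | .whiteLeft w => w.zigzagFree_toBTree

  theorem BWWhite.zigzagFree_toBTree : ∀ w : BWWhite, w.toBTree.zigzagFree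
    | .empty => by simp [BWWhite.toBTree, BTree.zigzagFree]
    | .whiteLeft w => BTree.zigzagFree_node_iff.mpr
        ⟨w.not_hasOnlyRightChild_toBTree, w.zigzagFree_toBTree, trivial⟩
    | .whiteLeftBlackRight w b => BTree.zigzagFree_node_iff.mpr
        ⟨w.not_hasOnlyRightChild_toBTree, w.zigzagFree_toBTree, b.zigzagFree_toBTree⟩
end

mutual
  theorem BWBlack.toBlack_toBTree : ∀ b : BWBlack, b.toBTree.toBlack = b
    | .blackLeft b => by
        rw [BWBlack.toBTree, BTree.toBlack_node_nil_left b.toBTree_ne_nil, b.toBlack_toBTree]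
    | .whiteLeft w => by
        rw [BWBlack.toBTree, BTree.toBlack_of_not_hasOnlyRightChild w.not_hasOnlyRightChild_toBTree,
          w.toWhite_toBTree]

  theorem BWWhite.toWhite_toBTree : ∀ w : BWWhite, w.toBTree.toWhite = w
    | .empty => by rw [BWWhite.toBTree, BTree.toWhite]
    | .whiteLeft w => by
        rw [BWWhite.toBTree, BTree.toWhite_node_nil_right w.toBTree_ne_nil, w.toWhite_toBTree]
    | .whiteLeftBlackRight w b => by
        rw [BWWhite.toBTree, BTree.toWhite_node w.toBTree_ne_nil b.toBTree_ne_nil,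
          w.toWhite_toBTree, b.toBlack_toBTree]
end

mutual
  theorem BTree.toBTree_toBlack (t : BTree) (ht : t ≠ nil) (hz : t.zigzagFree) :
      t.toBlack.toBTree = t := by
    by_cases hright : t.HasOnlyRightChild
    · obtain ⟨a, b, rfl⟩ := hright
      rw [toBlack, BWBlack.toBTree, toBTree_toBlack (node a b) nofun hz.2.2]
    · rw [toBlack_of_not_hasOnlyRightChild hright, BWBlack.toBTree, t.toBTree_toWhite ht hz hright]
  termination_by (sizeOf t, 1)

  theorem BTree.toBTree_toWhite (t : BTree) (ht : t ≠ nil) (hz : t.zigzagFree)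
      (hright : ¬t.HasOnlyRightChild) : t.toWhite.toBTree = t := by
    obtain ⟨l, r, rfl⟩ := exists_eq_node_of_ne_nil ht
    obtain ⟨hlright, hlz, hrz⟩ := zigzagFree_node_iff.mp hz
    by_cases hl : l = nil
    · obtain rfl : r = nil := by simpa [hasOnlyRightChild_node_iff, hl] using hright
      rw [hl, toWhite, BWWhite.toBTree]
    · have toBTree_toWhite_left : l.toWhite.toBTree = l := l.toBTree_toWhite hl hlz hlright
      by_cases hr : r = nil
      · rw [hr, toWhite_node_nil_right hl, BWWhite.toBTree, toBTree_toWhite_left]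
      · rw [toWhite_node hl hr, BWWhite.toBTree, toBTree_toWhite_left, r.toBTree_toBlack hr hrz]
  termination_by (sizeOf t, 0)
end

/-- The bijection between black-white trees and nonempty zigzag-free trees. -/
def blackEquivZigzagFree : BWBlack ≃ {t : BTree // t ≠ .nil ∧ t.zigzagFree} where
  toFun b := ⟨b.toBTree, b.toBTree_ne_nil, b.zigzagFree_toBTree⟩
  invFun t := t.1.toBlack
  left_inv b := b.toBlack_toBTree
  right_inv t := Subtype.ext (t.1.toBTree_toBlack t.2.1 t.2.2)

theorem size_blackEquivZigzagFree (b : BWBlack) : (blackEquivZigzagFree b).1.size = b.size :=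
  b.size_toBTree

theorem blackWhite_equinumerous_zigzagFree :
    ∀ n : ℕ,
      Nat.card {b : BWBlack // b.size = n}
        = Nat.card {t : BTree // t ≠ .nil ∧ t.zigzagFree ∧ t.size = n} := by
  intro n
  calc
    Nat.card {b : BWBlack // b.size = n}
      = Nat.card {t : {t : BTree // t ≠ .nil ∧ t.zigzagFree} // t.1.size = n} :=
        Nat.card_congr <| blackEquivZigzagFree.subtypeEquiv fun b => by
          rw [size_blackEquivZigzagFree]
    _ = Nat.card {t : BTree // (t ≠ .nil ∧ t.zigzagFree) ∧ t.size = n} :=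
        Nat.card_congr <| Equiv.subtypeSubtypeEquivSubtypeInter _ fun t : BTree => t.size = n
    _ = Nat.card {t : BTree // t ≠ .nil ∧ t.zigzagFree ∧ t.size = n} := by
        simp only [and_assoc]
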